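/- For every prime p ≥ 7, every positive integer n can be written as a sum of at most 4 squares of integers none of which is divisible by p. Moreover, for p = 5 the same holds for all positive integers n except n = 79. -/

import Mathlib

/-!
Multiplying a representation by `2` or `3` reaches `4 * n` and `9 * n` from `n`, so beyond a finite
range only `n` divisible by neither `4` nor `9` matter. For such `n` take some `m` prime to `p`,
of the right parity, such that `n - m ^ 2` is `1` or `2` modulo `4`, hence a sum of three squares:
Dirichlet's theorem and quadratic reciprocity put it in the image of a positive definite integral
ternary form of determinant one, and reduction theory makes every such form equivalent to
`x ^ 2 + y ^ 2 + z ^ 2`.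

It remains to repair `n = a ^ 2 + b ^ 2 + c ^ 2 + m ^ 2` when some of `a, b, c` are divisible by
`p`. The reflection of `(a, b, c)` in a vector `(±1, ±1, ±1)` preserves the sum of squares, and is
integral as soon as `3` divides the scalar product of the two vectors; the same applies to any three
of the four coordinates. Controlling `m` modulo `9` makes suitable reflections integral. Over
`ZMod p` they send zero coordinates to nonzero ones, unless the other coordinates satisfy relations
that can hold for several reflections at once only if `p = 5`, where one more congruence on `m`
excludes them.

If `a ≡ b ≢ 0` and `c ≡ 0` modulo `p`, no reflection helps directly. Then `p` divides `a - b` and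
`c`, and the norm form `u ^ 2 + 2 * d ^ 2` of `ℤ[√-2]`, in which `3 = (1 + √-2) * (1 - √-2)` splits,
first provides a representation with the same residues modulo `p` and other residues modulo `3`.
-/

/-! ### Sums of three squares -/

/-- The integer `n` is a sum of three integer squares. -/
def IsSumThreeSquares (n : ℤ) : Prop := ∃ x y z : ℤ, n = x ^ 2 + y ^ 2 + z ^ 2

lemma exists_abs_two_mul_add_mul_le (u : ℤ) {v : ℤ} (hv : 0 < v) :
    ∃ k : ℤ, |2 * (u + k * v)| ≤ v := by
  refine ⟨-((2 * u + v) / (2 * v)), abs_le.2 ?_⟩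
  have h1 := Int.emod_add_mul_ediv (2 * u + v) (2 * v)
  have h2 := Int.emod_nonneg (2 * u + v) (by omega : 2 * v ≠ 0)
  have h3 := Int.emod_lt_of_pos (2 * u + v) (by omega : 0 < 2 * v)
  constructor <;> linarith

/-- An integral ternary quadratic form, given by its symmetric matrix
`[[a, f, e], [f, b, d], [e, d, c]]`. -/
structure TernaryForm where
  (a b c d e f : ℤ)

namespace TernaryForm

/-- The value of the form at `(x, y, z)`; off-diagonal entries count twice. -/
def eval (Q : TernaryForm) (x y z : ℤ) : ℤ :=
  Q.a * x ^ 2 + Q.b * y ^ 2 + Q.c * z ^ 2 +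
    2 * (Q.d * (y * z) + Q.e * (x * z) + Q.f * (x * y))

/-- The determinant of the binary form `Q(x, y, 0)`. -/
def minor (Q : TernaryForm) : ℤ := Q.a * Q.b - Q.f ^ 2

/-- The determinant of the matrix of `Q`. -/
def det (Q : TernaryForm) : ℤ :=
  Q.a * Q.b * Q.c + 2 * Q.d * Q.e * Q.f - Q.a * Q.d ^ 2 - Q.b * Q.e ^ 2 - Q.c * Q.f ^ 2

/-- The form is positive definite, expressed by Sylvester's criterion, and has determinant one. -/
structure IsPosUnimodular (Q : TernaryForm) : Prop where
  a_pos : 0 < Q.a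
  minor_pos : 0 < Q.minor
  det_eq_one : Q.det = 1

/-- The form `Q(x, y + s * z, z)`. -/
def shearYZ (Q : TernaryForm) (s : ℤ) : TernaryForm :=
  ⟨Q.a, Q.b, Q.c + 2 * s * Q.d + s ^ 2 * Q.b, Q.d + s * Q.b, Q.e + s * Q.f, Q.f⟩

/-- The form `Q(x + s * y, y, z)`. -/
def shearXY (Q : TernaryForm) (s : ℤ) : TernaryForm :=
  ⟨Q.a, Q.b + 2 * s * Q.f + s ^ 2 * Q.a, Q.c, Q.d + s * Q.e, Q.e, Q.f + s * Q.a⟩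

/-- The form `Q(x, z, y)`. -/
def swapYZ (Q : TernaryForm) : TernaryForm := ⟨Q.a, Q.c, Q.b, Q.d, Q.f, Q.e⟩

/-- The form `Q(y, x, z)`. -/
def swapXY (Q : TernaryForm) : TernaryForm := ⟨Q.b, Q.a, Q.c, Q.e, Q.d, Q.f⟩

variable {Q : TernaryForm}

lemma eval_shearYZ (s x y z : ℤ) : (Q.shearYZ s).eval x y z = Q.eval x (y + s * z) z := by
  simp only [eval, shearYZ]; ring

lemma eval_shearXY (s x y z : ℤ) : (Q.shearXY s).eval x y z = Q.eval (x + s * y) y z := by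
  simp only [eval, shearXY]; ring

lemma eval_swapYZ (x y z : ℤ) : Q.swapYZ.eval x y z = Q.eval x z y := by
  simp only [eval, swapYZ]; ring

lemma eval_swapXY (x y z : ℤ) : Q.swapXY.eval x y z = Q.eval y x z := by
  simp only [eval, swapXY]; ring

lemma minor_shearYZ (s : ℤ) : (Q.shearYZ s).minor = Q.minor := rfl

lemma minor_shearXY (s : ℤ) : (Q.shearXY s).minor = Q.minor := by
  simp only [minor, shearXY]; ring

lemma minor_mul_minor_swapYZ :
    Q.minor * Q.swapYZ.minor = Q.a * Q.det + (Q.a * Q.d - Q.e * Q.f) ^ 2 := by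
  simp only [minor, swapYZ, det]; ring

namespace IsPosUnimodular

lemma shearYZ (hQ : Q.IsPosUnimodular) (s : ℤ) : (Q.shearYZ s).IsPosUnimodular where
  a_pos := hQ.a_pos
  minor_pos := hQ.minor_pos
  det_eq_one := by rw [← hQ.det_eq_one]; simp only [det, TernaryForm.shearYZ]; ring

lemma shearXY (hQ : Q.IsPosUnimodular) (s : ℤ) : (Q.shearXY s).IsPosUnimodular where
  a_pos := hQ.a_pos
  minor_pos := minor_shearXY (Q := Q) s ▸ hQ.minor_pos
  det_eq_one := by rw [← hQ.det_eq_one]; simp only [det, TernaryForm.shearXY]; ring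

lemma swapYZ (hQ : Q.IsPosUnimodular) : Q.swapYZ.IsPosUnimodular where
  a_pos := hQ.a_pos
  minor_pos := by
    refine pos_of_mul_pos_right (a := Q.minor) ?_ hQ.minor_pos.le
    rw [minor_mul_minor_swapYZ, hQ.det_eq_one, mul_one]
    exact add_pos_of_pos_of_nonneg hQ.a_pos (sq_nonneg _)
  det_eq_one := by rw [← hQ.det_eq_one]; simp only [det, TernaryForm.swapYZ]; ring

lemma swapXY (hQ : Q.IsPosUnimodular) : Q.swapXY.IsPosUnimodular where
  a_pos := by
    have hA : 0 < Q.a * Q.b - Q.f ^ 2 := hQ.minor_pos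
    change 0 < Q.b
    exact pos_of_mul_pos_right (a := Q.a) (by linarith [sq_nonneg Q.f]) hQ.a_pos.le
  minor_pos := by
    have hA : 0 < Q.a * Q.b - Q.f ^ 2 := hQ.minor_pos
    simpa only [minor, TernaryForm.swapXY, mul_comm] using hA
  det_eq_one := by rw [← hQ.det_eq_one]; simp only [det, TernaryForm.swapXY]; ring

lemma three_mul_minor_sq_le (hQ : Q.IsPosUnimodular) (hle : Q.minor ≤ Q.swapYZ.minor)
    (h : |2 * (Q.a * Q.d - Q.e * Q.f)| ≤ Q.minor) : 3 * Q.minor ^ 2 ≤ 4 * Q.a := by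
  have hmul := minor_mul_minor_swapYZ (Q := Q)
  rw [hQ.det_eq_one] at hmul
  have hsq := sq_le_sq' (abs_le.1 h).1 (abs_le.1 h).2
  have := mul_le_mul_of_nonneg_left hle hQ.minor_pos.le
  linarith

lemma three_mul_a_sq_le (hQ : Q.IsPosUnimodular) (hle : Q.a ≤ Q.b) (h : |2 * Q.f| ≤ Q.a) :
    3 * Q.a ^ 2 ≤ 4 * Q.minor := by
  have hsq := sq_le_sq' (abs_le.1 h).1 (abs_le.1 h).2
  have := mul_le_mul_of_nonneg_left hle hQ.a_pos.le
  rw [minor]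
  linarith

lemma isSumThreeSquares_eval_of_bounds (hQ : Q.IsPosUnimodular) (hf : |2 * Q.f| ≤ Q.a)
    (ha : 3 * Q.a ^ 2 ≤ 4 * Q.minor) (hA : 3 * Q.minor ^ 2 ≤ 4 * Q.a) (x y z : ℤ) :
    IsSumThreeSquares (Q.eval x y z) := by
  have ha_pos := hQ.a_pos
  have hA_pos := hQ.minor_pos
  have ha1 : Q.a = 1 := by nlinarith
  have hA1 : Q.minor = 1 := by nlinarith
  have hdet := hQ.det_eq_one
  rw [ha1, abs_le] at hf
  have hf0 : Q.f = 0 := by omega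
  have hb : Q.b = 1 := by simpa [minor, ha1, hf0] using hA1
  simp only [det, ha1, hb, hf0] at hdet
  refine ⟨x + Q.e * z, y + Q.d * z, z, ?_⟩
  rw [eval, ha1, hb, hf0]
  linear_combination z ^ 2 * hdet

end IsPosUnimodular

theorem IsPosUnimodular.isSumThreeSquares_eval {Q : TernaryForm} (hQ : Q.IsPosUnimodular)
    (x y z : ℤ) : IsSumThreeSquares (Q.eval x y z) := by
  obtain ⟨s, hs⟩ := exists_abs_two_mul_add_mul_le (Q.a * Q.d - Q.e * Q.f) hQ.minor_pos
  have hR := hQ.shearYZ s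
  have heval : Q.eval x y z = (Q.shearYZ s).eval x (y - s * z) z := by simp [eval_shearYZ]
  rw [heval]
  by_cases hlt : (Q.shearYZ s).swapYZ.minor < Q.minor
  · rw [← eval_swapYZ]
    exact hR.swapYZ.isSumThreeSquares_eval _ _ _
  have hA : 3 * Q.minor ^ 2 ≤ 4 * Q.a := by
    refine hR.three_mul_minor_sq_le (not_lt.1 hlt) ?_
    suffices (Q.shearYZ s).a * (Q.shearYZ s).d - (Q.shearYZ s).e * (Q.shearYZ s).f =
        Q.a * Q.d - Q.e * Q.f + s * Q.minor by rwa [this]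
    simp only [TernaryForm.shearYZ, minor]; ring
  generalize y - s * z = y
  obtain ⟨t, ht⟩ := exists_abs_two_mul_add_mul_le Q.f hQ.a_pos
  have hT := hR.shearXY t
  have heval' : (Q.shearYZ s).eval x y z = ((Q.shearYZ s).shearXY t).eval (x - t * y) y z := by
    simp [eval_shearXY]
  rw [heval']
  by_cases hlt' : ((Q.shearYZ s).shearXY t).b < Q.a
  · rw [← eval_swapXY]
    exact hT.swapXY.isSumThreeSquares_eval _ _ _
  · refine hT.isSumThreeSquares_eval_of_bounds ht ?_ ?_ _ _ _
    · exact hT.three_mul_a_sq_le (not_lt.1 hlt') ht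
    · rwa [minor_shearXY, minor_shearYZ]
termination_by (Q.a.toNat, Q.minor.toNat)
decreasing_by
  · exact Prod.Lex.right _ ((Int.toNat_lt_toNat hQ.minor_pos).2 hlt)
  · exact Prod.Lex.left _ _ ((Int.toNat_lt_toNat hQ.a_pos).2 hlt')

end TernaryForm

lemma IsSumThreeSquares.of_dvd {N d r : ℤ} (hd : 0 < d) (hN : 0 < d * N - 1)
    (h : d * N - 1 ∣ r ^ 2 + d) : IsSumThreeSquares N := by
  obtain ⟨a, ha⟩ := h
  let Q : TernaryForm := ⟨a, d * N - 1, N, 0, 1, r⟩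
  have hminor : Q.minor = d := by
    simp only [TernaryForm.minor, Q]
    linear_combination -ha
  have hdet : Q.det = 1 := by
    simp only [TernaryForm.det, Q]
    linear_combination -N * ha
  have ha_pos : 0 < a := pos_of_mul_pos_right (ha ▸ by positivity) hN.le
  have hQ : Q.IsPosUnimodular := ⟨ha_pos, hminor ▸ hd, hdet⟩
  simpa [TernaryForm.eval, Q] using hQ.isSumThreeSquares_eval 0 0 1

open NumberTheorySymbols

lemma jacobiSym_neg_eq_one_of_dvd_add_one {d q : ℕ} (hd : d % 4 = 1) (hq : q % 4 = 1)
    (h : d ∣ q + 1) : J(-d | q) = 1 := by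
  have hqodd : Odd q := Nat.odd_iff.2 (by omega)
  have hmod : (q : ℤ) % d = -1 % d :=
    (Int.modEq_iff_dvd.2 (by rw [sub_neg_eq_add]; exact_mod_cast h)).symm
  rw [jacobiSym.neg _ hqodd, ZMod.χ₄_nat_one_mod_four hq, one_mul,
    jacobiSym.quadratic_reciprocity_one_mod_four hd hqodd, jacobiSym.mod_left' hmod,
    jacobiSym.at_neg_one (Nat.odd_iff.2 (by omega)), ZMod.χ₄_nat_one_mod_four hd]

lemma jacobiSym_neg_eq_one_of_dvd_two_mul_add_one {d q : ℕ} (hd : d % 8 = 3) (hq : Odd q)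
    (h : d ∣ 2 * q + 1) : J(-d | q) = 1 := by
  have hdodd : Odd d := Nat.odd_iff.2 (by omega)
  have hmod : (-2 * q : ℤ) % d = 1 % d := by
    refine Int.modEq_iff_dvd.2 ?_
    rw [neg_mul, sub_neg_eq_add, add_comm]
    exact_mod_cast h
  have hqd : J(q | d) = 1 := by
    have hJ := jacobiSym.mod_left' hmod
    rw [jacobiSym.mul_left, jacobiSym.at_neg_two hdodd, ZMod.χ₈'_nat_eq_if_mod_eight,
      jacobiSym.one_left] at hJ
    simpa [hd, Nat.odd_iff.1 hdodd] using hJ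
  rw [jacobiSym.neg _ hq]
  rcases Nat.odd_mod_four_iff.1 (Nat.odd_iff.1 hq) with h4 | h4
  · rw [ZMod.χ₄_nat_one_mod_four h4, one_mul,
      jacobiSym.quadratic_reciprocity_one_mod_four' hdodd h4, hqd]
  · rw [ZMod.χ₄_nat_three_mod_four h4,
      jacobiSym.quadratic_reciprocity_three_mod_four (by omega) h4, hqd, neg_one_mul, neg_neg]

lemma exists_dvd_sq_add_of_jacobiSym_eq_one {d q : ℕ} (hq : q.Prime) (h : J(-d | q) = 1) :
    ∃ r : ℤ, (q : ℤ) ∣ r ^ 2 + d := by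
  have := Fact.mk hq
  obtain ⟨r, hr⟩ := ZMod.isSquare_of_jacobiSym_eq_one h
  obtain ⟨r, rfl⟩ := ZMod.intCast_surjective r
  refine ⟨r, ?_⟩
  rw [← ZMod.intCast_zmod_eq_zero_iff_dvd]
  push_cast at hr ⊢
  linear_combination -hr

lemma exists_two_mul_dvd_sq_add {q : ℕ} {d r : ℤ} (hq : Odd q) (hd : Odd d)
    (h : (q : ℤ) ∣ r ^ 2 + d) : ∃ r : ℤ, 2 * (q : ℤ) ∣ r ^ 2 + d := by
  obtain ⟨r, hr, hodd⟩ : ∃ r : ℤ, (q : ℤ) ∣ r ^ 2 + d ∧ Odd r := by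
    rcases Int.even_or_odd r with heven | hodd
    · refine ⟨r + q, ?_, heven.add_odd (by exact_mod_cast hq)⟩
      rw [show (r + q) ^ 2 + d = (r ^ 2 + d) + q * (2 * r + q) by ring]
      exact dvd_add h (dvd_mul_right _ _)
    · exact ⟨r, h, hodd⟩
  have hcop : IsCoprime (2 : ℤ) q := by
    exact_mod_cast Nat.isCoprime_iff_coprime.2 (Nat.coprime_two_left.2 hq)
  exact ⟨r, hcop.mul_dvd (hodd.pow.add_odd hd).two_dvd hr⟩

lemma exists_prime_eq_mul_add {k c : ℕ} (hk : k ≠ 0) (h : c.Coprime k) :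
    ∃ q m : ℕ, q.Prime ∧ q = k * m + c := by
  obtain ⟨q, hgt, hq, hmod⟩ := Nat.forall_exists_prime_gt_and_modEq c hk h
  obtain ⟨m, hm⟩ := (Nat.modEq_iff_dvd' hgt.le).1 hmod.symm
  exact ⟨q, m, hq, by omega⟩

lemma isSumThreeSquares_of_mod_four_eq_two {N : ℕ} (hN : N % 4 = 2) : IsSumThreeSquares N := by
  obtain ⟨M, rfl⟩ : ∃ M, N = M + 1 := ⟨N - 1, by omega⟩
  have hcop : M.Coprime (4 * (M + 1)) := by
    have htwo : M.Coprime 2 := Nat.coprime_two_right.2 (Nat.odd_iff.2 (by omega))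
    exact .mul_right (htwo.pow_right 2) (by simp)
  obtain ⟨q, m, hq, hqm⟩ := exists_prime_eq_mul_add (by omega) hcop
  have hqd : (4 * m + 1) * (M + 1) = q + 1 := by rw [hqm]; ring
  have hq4 : q % 4 = 1 := by
    rw [hqm, mul_assoc, Nat.mul_add_mod]; omega
  have hJ : J(-(4 * m + 1 : ℕ) | q) = 1 :=
    jacobiSym_neg_eq_one_of_dvd_add_one (by omega) hq4 (Dvd.intro _ hqd)
  obtain ⟨r, hr⟩ := exists_dvd_sq_add_of_jacobiSym_eq_one hq hJ
  have hqd' : ((4 * m + 1 : ℕ) : ℤ) * (M + 1 : ℕ) - 1 = q := by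
    rw [sub_eq_iff_eq_add]; exact_mod_cast hqd
  exact .of_dvd (by positivity) (hqd' ▸ by exact_mod_cast hq.pos) (hqd' ▸ hr)

lemma isSumThreeSquares_of_mod_four_eq_one {N : ℕ} (hN : N % 4 = 1) : IsSumThreeSquares N := by
  obtain ⟨t, rfl⟩ : ∃ t, N = 4 * t + 1 := ⟨N / 4, by omega⟩
  rcases Nat.eq_zero_or_pos t with rfl | ht
  · exact ⟨1, 0, 0, by norm_num⟩
  have hcop : (6 * t + 1).Coprime (4 * (4 * t + 1)) := by
    have htwo : (6 * t + 1).Coprime 2 := Nat.coprime_two_right.2 (Nat.odd_iff.2 (by omega))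
    exact .mul_right (htwo.pow_right 2)
      (Nat.isCoprime_iff_coprime.1 ⟨-2, 3, by push_cast; ring⟩)
  obtain ⟨q, m, hq, hqm⟩ := exists_prime_eq_mul_add (by omega) hcop
  have hqd : (8 * m + 3) * (4 * t + 1) = 2 * q + 1 := by rw [hqm]; ring
  have hqodd : Odd q := hq.odd_of_ne_two (by nlinarith)
  have hJ : J(-(8 * m + 3 : ℕ) | q) = 1 :=
    jacobiSym_neg_eq_one_of_dvd_two_mul_add_one (by omega) hqodd (Dvd.intro _ hqd)
  obtain ⟨r, hr⟩ := exists_dvd_sq_add_of_jacobiSym_eq_one hq hJ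
  obtain ⟨r, hr⟩ := exists_two_mul_dvd_sq_add hqodd ⟨4 * m + 1, by push_cast; ring⟩ hr
  have hqd' : ((8 * m + 3 : ℕ) : ℤ) * (4 * t + 1 : ℕ) - 1 = 2 * q := by
    rw [sub_eq_iff_eq_add]; exact_mod_cast hqd
  exact .of_dvd (by positivity) (hqd' ▸ by exact_mod_cast Nat.mul_pos two_pos hq.pos) (hqd' ▸ hr)

theorem isSumThreeSquares_of_mod_four {N : ℤ} (hN : 0 < N) (h : N % 4 = 1 ∨ N % 4 = 2) :
    IsSumThreeSquares N := by
  lift N to ℕ using hN.le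
  rcases h with h | h
  · exact isSumThreeSquares_of_mod_four_eq_one (by omega)
  · exact isSumThreeSquares_of_mod_four_eq_two (by omega)

/-! ### Moving coordinates away from multiples of `p` -/

lemma three_dvd_sub_or_add {u v : ℤ} (hu : ¬ 3 ∣ u) (hv : ¬ 3 ∣ v) : 3 ∣ u - v ∨ 3 ∣ u + v := by
  rcases (by omega : u % 3 = 1 ∨ u % 3 = 2) with h | h <;>
    rcases (by omega : v % 3 = 1 ∨ v % 3 = 2) with h' | h' <;> omega

lemma three_dvd_iff_not_three_dvd {u v : ℤ} (hsub : ¬ 3 ∣ u - v) (hadd : ¬ 3 ∣ u + v) :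
    3 ∣ u ↔ ¬ 3 ∣ v := by
  refine ⟨fun hu hv ↦ hsub (dvd_sub hu hv), fun hv ↦ ?_⟩
  by_contra hu
  exact (three_dvd_sub_or_add hu hv).elim hsub hadd

lemma nine_dvd_sq_or_three_dvd_sq_sub_one (x : ℤ) :
    3 ∣ x ∧ 9 ∣ x ^ 2 ∨ ¬ 3 ∣ x ∧ 3 ∣ x ^ 2 - 1 := by
  by_cases h : 3 ∣ x
  · exact .inl ⟨h, pow_dvd_pow_of_dvd h 2⟩
  · refine .inr ⟨h, ?_⟩
    rw [show x ^ 2 - 1 = (x - 1) * (x + 1) by ring]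
    rcases three_dvd_sub_or_add h (v := 1) (by norm_num) with h | h
    · exact h.mul_right _
    · exact h.mul_left _

lemma exists_sq_eq_and_three_dvd_sub {x y : ℤ} (hx : ¬ 3 ∣ x) (hy : ¬ 3 ∣ y) :
    ∃ z, z ^ 2 = y ^ 2 ∧ 3 ∣ x - z := by
  rcases three_dvd_sub_or_add hx hy with h | h
  · exact ⟨y, rfl, h⟩
  · exact ⟨-y, neg_sq y, by simpa using h⟩

namespace IsSumThreeSquares

lemma exists_of_mod_three_eq_two {N : ℤ} (h : IsSumThreeSquares N) (hN : N % 3 = 2) :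
    ∃ a b d : ℤ, a ^ 2 + b ^ 2 + d ^ 2 = N ∧ ¬ 3 ∣ a ∧ 3 ∣ a - b ∧ 3 ∣ d := by
  have of_three_dvd_last : ∀ u v w : ℤ, u ^ 2 + v ^ 2 + w ^ 2 = N → ¬ 3 ∣ u → ¬ 3 ∣ v → 3 ∣ w →
      ∃ a b d : ℤ, a ^ 2 + b ^ 2 + d ^ 2 = N ∧ ¬ 3 ∣ a ∧ 3 ∣ a - b ∧ 3 ∣ d := by
    intro u v w huvw hu hv hw
    obtain ⟨v', hv', hd⟩ := exists_sq_eq_and_three_dvd_sub hu hv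
    exact ⟨u, v', w, hv' ▸ huvw, hu, hd, hw⟩
  obtain ⟨x, y, z, hxyz⟩ := h
  rcases nine_dvd_sq_or_three_dvd_sq_sub_one x with hx | hx <;>
    rcases nine_dvd_sq_or_three_dvd_sq_sub_one y with hy | hy <;>
    rcases nine_dvd_sq_or_three_dvd_sq_sub_one z with hz | hz <;> try omega
  · exact of_three_dvd_last y z x (by rw [hxyz]; ring) hy.1 hz.1 hx.1
  · exact of_three_dvd_last x z y (by rw [hxyz]; ring) hx.1 hz.1 hy.1
  · exact of_three_dvd_last x y z hxyz.symm hx.1 hy.1 hz.1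

lemma exists_of_three_dvd {N : ℤ} (h : IsSumThreeSquares N) (hN : 3 ∣ N) (hN9 : ¬ 9 ∣ N) :
    ∃ a b c : ℤ, a ^ 2 + b ^ 2 + c ^ 2 = N ∧ 3 ∣ a - b ∧ 3 ∣ a - c := by
  obtain ⟨x, y, z, rfl⟩ := h
  rcases nine_dvd_sq_or_three_dvd_sq_sub_one x with hx | hx <;>
    rcases nine_dvd_sq_or_three_dvd_sq_sub_one y with hy | hy <;>
    rcases nine_dvd_sq_or_three_dvd_sq_sub_one z with hz | hz <;> try omega
  obtain ⟨y', hy', hxy⟩ := exists_sq_eq_and_three_dvd_sub hx.1 hy.1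
  obtain ⟨z', hz', hxz⟩ := exists_sq_eq_and_three_dvd_sub hx.1 hz.1
  exact ⟨x, y', z', by rw [hy', hz'], hxy, hxz⟩

end IsSumThreeSquares

lemma five_eq_zero_and_sq_add_sq_eq_zero {K : Type*} [Field K] {b c : K} (h2 : (2 : K) ≠ 0)
    (hb : b ≠ 0) (hc : c ≠ 0) (h : b = c ∨ b = -2 * c ∨ c = -2 * b)
    (h' : b = -c ∨ b = 2 * c ∨ c = 2 * b) : (5 : K) = 0 ∧ b ^ 2 + c ^ 2 = 0 := by
  rcases h with h | h | h <;> rcases h' with h' | h' | h' <;> grind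

-- If `u + d√-2 = 3 * (v + w√-2)`, replace it by `(1 ± √-2) ^ 2 * (v + w√-2)`.
lemma exists_sq_add_two_mul_sq_eq_not_three_dvd (u d : ℤ) (h : u ≠ 0 ∨ d ≠ 0) :
    ∃ k e : ℤ, (u + 2 * k) ^ 2 + 2 * e ^ 2 = u ^ 2 + 2 * d ^ 2 ∧ ¬ (3 ∣ u + 2 * k ∧ 3 ∣ e) := by
  by_cases h3 : 3 ∣ u ∧ 3 ∣ d
  · obtain ⟨⟨v, rfl⟩, ⟨w, rfl⟩⟩ := h3
    obtain ⟨k, e, hsq, hdvd⟩ := exists_sq_add_two_mul_sq_eq_not_three_dvd v w (by omega)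
    by_cases hplus : 3 ∣ v + 2 * k + 4 * e
    · exact ⟨k - v - 2 * e, 2 * (v + 2 * k) + e, by linear_combination 9 * hsq, by omega⟩
    · exact ⟨k - v + 2 * e, 2 * (v + 2 * k) - e, by linear_combination 9 * hsq, by omega⟩
  · exact ⟨0, d, by ring, by simpa using h3⟩
termination_by u.natAbs + d.natAbs
decreasing_by omega

lemma not_three_dvd_of_three_dvd_sq_add_two_mul_sq {x y : ℤ} (h : 3 ∣ x ^ 2 + 2 * y ^ 2)
    (hxy : ¬ (3 ∣ x ∧ 3 ∣ y)) : ¬ 3 ∣ x ∧ ¬ 3 ∣ y := by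
  rcases nine_dvd_sq_or_three_dvd_sq_sub_one x with hx | hx <;>
    rcases nine_dvd_sq_or_three_dvd_sq_sub_one y with hy | hy <;> omega

lemma exists_add_mul_sq_eq_not_three_dvd {q a b d : ℤ} (hq : ¬ 3 ∣ q) (hab : q ∣ a - b) (hd : q ∣ d)
    (hab3 : 3 ∣ a - b) (hd3 : 3 ∣ d) (hne : a ≠ b ∨ d ≠ 0) :
    ∃ k f : ℤ, (a + q * k) ^ 2 + (b - q * k) ^ 2 + (q * f) ^ 2 = a ^ 2 + b ^ 2 + d ^ 2 ∧
      ¬ 3 ∣ a + q * k - (b - q * k) ∧ ¬ 3 ∣ q * f := by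
  obtain ⟨u, hu⟩ := hab
  obtain ⟨e, rfl⟩ := hd
  have hne' : u ≠ 0 ∨ e ≠ 0 := by
    by_contra! h
    rcases hne with h' | h'
    · exact h' (by rw [← sub_eq_zero, hu, h.1, mul_zero])
    · exact h' (by rw [h.2, mul_zero])
  obtain ⟨k, f, hsq, hdvd⟩ := exists_sq_add_two_mul_sq_eq_not_three_dvd u e hne'
  have hsub : a + q * k - (b - q * k) = q * (u + 2 * k) := by linear_combination hu
  have hnorm : 3 ∣ (q * (u + 2 * k)) ^ 2 + 2 * (q * f) ^ 2 := by
    rw [show (q * (u + 2 * k)) ^ 2 + 2 * (q * f) ^ 2 = (a - b) ^ 2 + 2 * (q * e) ^ 2 by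
      rw [hu]; linear_combination q ^ 2 * hsq]
    exact dvd_add (dvd_pow hab3 two_ne_zero) ((dvd_pow hd3 two_ne_zero).mul_left 2)
  refine ⟨k, f, ?_, hsub ▸ not_three_dvd_of_three_dvd_sq_add_two_mul_sq hnorm ?_⟩
  · have hhalf : 2 * (u * k + k ^ 2) + f ^ 2 = e ^ 2 := by linarith
    linear_combination 2 * q * k * hu + q ^ 2 * hhalf
  · rintro ⟨h, h'⟩
    exact hdvd ⟨(Int.prime_three.dvd_mul.1 h).resolve_left hq,
      (Int.prime_three.dvd_mul.1 h').resolve_left hq⟩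

/-- The integer `n` is a sum of four squares of integers each of which is zero or prime to the
prime `p`. -/
def IsSumFourSquaresAvoiding (p : ℕ) (n : ℤ) : Prop :=
  ∃ a b c d : ℤ, a ^ 2 + b ^ 2 + c ^ 2 + d ^ 2 = n ∧
    ((a : ZMod p) = 0 → a = 0) ∧ ((b : ZMod p) = 0 → b = 0) ∧
    ((c : ZMod p) = 0 → c = 0) ∧ ((d : ZMod p) = 0 → d = 0)

namespace IsSumFourSquaresAvoiding

variable {p : ℕ} {n a b c d m : ℤ}

lemma of_ne (hn : a ^ 2 + b ^ 2 + c ^ 2 + d ^ 2 = n) (ha : (a : ZMod p) ≠ 0)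
    (hb : (b : ZMod p) ≠ 0) (hc : (c : ZMod p) ≠ 0) (hd : (d : ZMod p) ≠ 0) :
    IsSumFourSquaresAvoiding p n :=
  ⟨a, b, c, d, hn, (absurd · ha), (absurd · hb), (absurd · hc), (absurd · hd)⟩

-- The reflection in `(1, -1, 1, 0)`, which has norm three.
lemma of_reflection (hn : a ^ 2 + b ^ 2 + c ^ 2 + d ^ 2 = n) (h3 : 3 ∣ a - b + c)
    (ha : (a + 2 * b - 2 * c : ZMod p) ≠ 0) (hb : (2 * a + b + 2 * c : ZMod p) ≠ 0)
    (hc : (2 * b + c - 2 * a : ZMod p) ≠ 0) (hd : (d : ZMod p) ≠ 0) :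
    IsSumFourSquaresAvoiding p n := by
  obtain ⟨t, ht⟩ := h3
  have htp := congrArg (Int.cast : ℤ → ZMod p) ht
  push_cast at htp
  refine of_ne (a := a - 2 * t) (b := b + 2 * t) (c := c - 2 * t) (d := d) ?_ ?_ ?_ ?_ hd
  · linear_combination hn - 4 * t * ht
  · intro h; push_cast at h; exact ha (by linear_combination 3 * h - 2 * htp)
  · intro h; push_cast at h; exact hb (by linear_combination 3 * h + 2 * htp)
  · intro h; push_cast at h; exact hc (by linear_combination 3 * h - 2 * htp)

variable [Fact p.Prime]

lemma of_first_zero (h2 : (2 : ZMod p) ≠ 0) (hn : a ^ 2 + b ^ 2 + c ^ 2 + d ^ 2 = n)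
    (hab3 : 3 ∣ a - b) (hc3 : 3 ∣ c) (ha : (a : ZMod p) = 0) (hb : (b : ZMod p) ≠ 0)
    (hc : (c : ZMod p) ≠ 0) (hd : (d : ZMod p) ≠ 0)
    (h5 : (5 : ZMod p) ≠ 0 ∨ (b ^ 2 + c ^ 2 : ZMod p) ≠ 0) :
    IsSumFourSquaresAvoiding p n := by
  by_contra hnot
  have hplus : (b : ZMod p) = c ∨ (b : ZMod p) = -2 * c ∨ (c : ZMod p) = -2 * b := by
    by_contra! h
    refine hnot (of_reflection hn (by omega) ?_ ?_ ?_ hd) <;> rw [ha] <;> intro h0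
    · exact h.1 (mul_left_cancel₀ h2 (by linear_combination h0))
    · exact h.2.1 (by linear_combination h0)
    · exact h.2.2 (by linear_combination h0)
  have hminus : (b : ZMod p) = -c ∨ (b : ZMod p) = 2 * c ∨ (c : ZMod p) = 2 * b := by
    by_contra! h
    refine hnot (of_reflection (a := a) (b := b) (c := -c) (d := d) (by rwa [neg_sq]) (by omega)
      ?_ ?_ ?_ hd) <;> rw [ha] <;> push_cast <;> intro h0
    · exact h.1 (mul_left_cancel₀ h2 (by linear_combination h0))
    · exact h.2.1 (by linear_combination h0)
    · exact h.2.2 (by linear_combination -h0)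
  have := five_eq_zero_and_sq_add_sq_eq_zero h2 hb hc hplus hminus
  tauto

lemma of_first_zero_of_not_three_dvd (h2 : (2 : ZMod p) ≠ 0)
    (hn : a ^ 2 + b ^ 2 + c ^ 2 + d ^ 2 = n) (ha3 : ¬ 3 ∣ a) (hbc3 : 3 ∣ b ↔ ¬ 3 ∣ c)
    (ha : (a : ZMod p) = 0) (hb : (b : ZMod p) ≠ 0) (hc : (c : ZMod p) ≠ 0)
    (hd : (d : ZMod p) ≠ 0) (h5 : (5 : ZMod p) ≠ 0 ∨ (b ^ 2 + c ^ 2 : ZMod p) ≠ 0) :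
    IsSumFourSquaresAvoiding p n := by
  wlog hc3 : 3 ∣ c generalizing b c
  · exact this (b := c) (c := b) (by linear_combination hn) (by tauto) hc hb
      (by rwa [add_comm]) (by tauto)
  rcases three_dvd_sub_or_add ha3 (v := b) (by tauto) with hab3 | hab3
  · exact of_first_zero h2 hn hab3 hc3 ha hb hc hd h5
  · exact of_first_zero (a := -a) h2 (by rwa [neg_sq]) (by omega) hc3 (by simpa using ha) hb hc
      hd h5

lemma of_two_zeros (h2 : (2 : ZMod p) ≠ 0) (hn : a ^ 2 + b ^ 2 + c ^ 2 + d ^ 2 = n)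
    (hab3 : 3 ∣ a - b) (hc3 : 3 ∣ c) (ha : (a : ZMod p) = 0) (hb : (b : ZMod p) = 0)
    (hc : (c : ZMod p) ≠ 0) (hd : (d : ZMod p) ≠ 0) :
    IsSumFourSquaresAvoiding p n := by
  refine of_reflection hn (by omega) ?_ ?_ ?_ hd <;> simp [ha, hb, h2, hc]

lemma of_third_zero (h2 : (2 : ZMod p) ≠ 0) (hn : a ^ 2 + b ^ 2 + c ^ 2 + d ^ 2 = n)
    (hab3 : 3 ∣ a - b) (hc3 : 3 ∣ c) (hc : (c : ZMod p) = 0) (hd : (d : ZMod p) ≠ 0)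
    (h₀ : (a : ZMod p) ≠ b) (h₁ : (a : ZMod p) ≠ -2 * b) (h₂ : (b : ZMod p) ≠ -2 * a) :
    IsSumFourSquaresAvoiding p n := by
  refine of_reflection hn (by omega) ?_ ?_ ?_ hd <;> rw [hc] <;> intro h
  · exact h₁ (by linear_combination h)
  · exact h₂ (by linear_combination h)
  · exact h₀ (mul_left_cancel₀ h2 (by linear_combination -h))

lemma of_first_eq_second (h2 : (2 : ZMod p) ≠ 0) (h3 : (3 : ZMod p) ≠ 0)
    (hn : a ^ 2 + b ^ 2 + m ^ 2 + d ^ 2 = n) (ha3 : ¬ 3 ∣ a) (hab3 : 3 ∣ a - b) (hd3 : 3 ∣ d)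
    (hab : (a : ZMod p) = b) (ha : (a : ZMod p) ≠ 0) (hd : (d : ZMod p) = 0)
    (hm : (m : ZMod p) ≠ 0) : IsSumFourSquaresAvoiding p n := by
  have hp3 : ¬ (3 : ℤ) ∣ p := by
    intro h
    obtain rfl := (Nat.prime_dvd_prime_iff_eq Nat.prime_three Fact.out).1 (by exact_mod_cast h)
    exact h3 (by exact_mod_cast ZMod.natCast_self 3)
  by_cases hne : a ≠ b ∨ d ≠ 0
  swap
  · obtain ⟨rfl, rfl⟩ : a = b ∧ d = 0 := by tauto
    exact ⟨a, a, m, 0, hn, (absurd · ha), (absurd · ha), (absurd · hm), fun _ ↦ rfl⟩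
  obtain ⟨k, f, hsq, hk3, hf3⟩ := exists_add_mul_sq_eq_not_three_dvd hp3
    ((ZMod.intCast_eq_intCast_iff_dvd_sub b a p).1 hab.symm)
    ((ZMod.intCast_zmod_eq_zero_iff_dvd d p).1 hd) hab3 hd3 hne
  refine of_first_zero_of_not_three_dvd (a := p * f) (b := a + p * k) (c := b - p * k) (d := m) h2
    (by linear_combination hn + hsq) hf3 (three_dvd_iff_not_three_dvd hk3 (by omega)) (by simp)
    (by simpa using ha) (by simpa [← hab] using ha) hm (.inr ?_)
  simpa [← hab, ← two_mul] using ⟨h2, ha⟩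

lemma of_first_eq_neg_two_mul_of_reflection {t : ℤ} (h2 : (2 : ZMod p) ≠ 0) (h3 : (3 : ZMod p) ≠ 0)
    (h5 : (5 : ZMod p) ≠ 0) (hn : a ^ 2 + b ^ 2 + m ^ 2 + d ^ 2 = n) (ha3 : ¬ 3 ∣ a) (hd3 : 3 ∣ d)
    (hab : (a : ZMod p) = -2 * b) (hb : (b : ZMod p) ≠ 0) (hd : (d : ZMod p) = 0)
    (hm : (m : ZMod p) ≠ 0) (ht : a - b + d = 3 * t) (hat3 : ¬ 3 ∣ a - 2 * t) :
    IsSumFourSquaresAvoiding p n := by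
  have htb : (t : ZMod p) = -b := by
    have hcast := congrArg (Int.cast : ℤ → ZMod p) ht
    push_cast at hcast
    exact mul_left_cancel₀ h3 (by linear_combination -hcast + hab + hd)
  refine of_first_zero_of_not_three_dvd (a := a - 2 * t) (b := b + 2 * t) (c := d - 2 * t) (d := m)
    h2 (by linear_combination hn - 4 * t * ht) hat3
    (three_dvd_iff_not_three_dvd (by omega) (by omega)) ?_ ?_ ?_ hm (.inl h5) <;>
    push_cast <;> rw [htb]
  · linear_combination hab
  · intro h; exact hb (by linear_combination -h)
  · intro h; exact mul_ne_zero h2 hb (by linear_combination h - hd)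

lemma of_first_eq_neg_two_mul_of_three_dvd (h2 : (2 : ZMod p) ≠ 0) (h5 : (5 : ZMod p) ≠ 0)
    (hn : a ^ 2 + b ^ 2 + m ^ 2 + d ^ 2 = n) (hab3 : 9 ∣ 4 * a - b) (hd3 : 3 ∣ d) (hm9 : 9 ∣ m)
    (hab : (a : ZMod p) = -2 * b) (hd : (d : ZMod p) = 0) (hm : (m : ZMod p) ≠ 0)
    (h₁ : (m : ZMod p) ≠ 9 * b) (h₂ : (4 * m : ZMod p) ≠ -9 * b) :
    IsSumFourSquaresAvoiding p n := by
  obtain ⟨t, ht⟩ : 3 ∣ a - b + m := by omega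
  have htb : (3 * t : ZMod p) = m - 3 * b := by
    have hcast := congrArg (Int.cast : ℤ → ZMod p) ht
    push_cast at hcast
    linear_combination -hcast + hab
  refine of_third_zero (a := b + 2 * t) (b := m - 2 * t) (c := d) (d := a - 2 * t) h2
    (by linear_combination hn - 4 * t * ht) (by omega) hd3 hd ?_ ?_ ?_ ?_ <;> push_cast <;> intro h
  · exact mul_ne_zero h2 hm (by linear_combination -3 * h + 3 * hab - 2 * htb)
  · exact h₁ (by linear_combination 3 * h - 4 * htb)
  · exact h₂ (by linear_combination 3 * h + 2 * htb)
  · exact mul_ne_zero h5 hm (by linear_combination 3 * h - 2 * htb)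

lemma of_first_eq_neg_two_mul (h2 : (2 : ZMod p) ≠ 0) (h3 : (3 : ZMod p) ≠ 0)
    (h5 : (5 : ZMod p) ≠ 0) (hn : a ^ 2 + b ^ 2 + m ^ 2 + d ^ 2 = n) (ha3 : ¬ 3 ∣ a)
    (hab3 : 3 ∣ a - b) (hd3 : 3 ∣ d) (hm9 : 9 ∣ m) (hab : (a : ZMod p) = -2 * b)
    (hb : (b : ZMod p) ≠ 0) (hd : (d : ZMod p) = 0) (hm : (m : ZMod p) ≠ 0) :
    IsSumFourSquaresAvoiding p n := by
  by_contra hnot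
  obtain ⟨s, hs⟩ : 3 ∣ a - b + d := by omega
  obtain ⟨t, ht⟩ : 3 ∣ a - b + -d := by omega
  have has : 3 ∣ a - 2 * s := by
    by_contra h
    exact hnot (of_first_eq_neg_two_mul_of_reflection h2 h3 h5 hn ha3 hd3 hab hb hd hm hs h)
  have hat : 3 ∣ a - 2 * t := by
    by_contra h
    exact hnot (of_first_eq_neg_two_mul_of_reflection h2 h3 h5 (by rwa [neg_sq]) ha3
      (by rwa [dvd_neg]) hab hb (by simpa using hd) hm ht h)
  have hab9 : 9 ∣ 4 * a - b := by omega
  have hplus : (m : ZMod p) = 9 * b ∨ (4 * m : ZMod p) = -9 * b := by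
    by_contra! h
    exact hnot (of_first_eq_neg_two_mul_of_three_dvd h2 h5 hn hab9 hd3 hm9 hab hd hm h.1 h.2)
  have hminus : (-m : ZMod p) = 9 * b ∨ (4 * -m : ZMod p) = -9 * b := by
    by_contra! h
    exact hnot (of_first_eq_neg_two_mul_of_three_dvd (m := -m) h2 h5 (by rwa [neg_sq]) hab9 hd3
      (by rwa [dvd_neg]) hab hd (by simpa using hm) (by simpa using h.1) (by simpa using h.2))
  have h2m := mul_ne_zero h2 hm
  have h8m := mul_ne_zero h2 (mul_ne_zero h2 h2m)
  have h3m := mul_ne_zero h3 hm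
  rcases hplus with h | h <;> rcases hminus with h' | h'
  · exact h2m (by linear_combination h - h')
  · exact h3m (by linear_combination -h - h')
  · exact h3m (by linear_combination h + h')
  · exact h8m (by linear_combination h - h')

lemma of_three_dvd (h2 : (2 : ZMod p) ≠ 0) (hn : a ^ 2 + b ^ 2 + c ^ 2 + m ^ 2 = n) (ha3 : 3 ∣ a)
    (hb3 : 3 ∣ b) (hc3 : 3 ∣ c) (hm : (m : ZMod p) ≠ 0)
    (hN : (a ^ 2 + b ^ 2 + c ^ 2 : ZMod p) ≠ 0) : IsSumFourSquaresAvoiding p n := by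
  by_cases ha : (a : ZMod p) = 0 <;> by_cases hb : (b : ZMod p) = 0 <;>
    by_cases hc : (c : ZMod p) = 0
  · simp [ha, hb, hc] at hN
  · exact of_two_zeros h2 hn (by omega) hc3 ha hb hc hm
  · exact of_two_zeros (a := a) (b := c) (c := b) h2 (by linear_combination hn) (by omega) hb3 ha
      hc hb hm
  · exact of_first_zero h2 hn (by omega) hc3 ha hb hc hm (.inr (by simpa [ha] using hN))
  · exact of_two_zeros (a := b) (b := c) (c := a) h2 (by linear_combination hn) (by omega) ha3 hb
      hc ha hm
  · exact of_first_zero (a := b) (b := a) (c := c) h2 (by linear_combination hn) (by omega) hc3 hb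
      ha hc hm (.inr (by simpa [hb] using hN))
  · exact of_first_zero (a := c) (b := a) (c := b) h2 (by linear_combination hn) (by omega) hb3 hc
      ha hb hm (.inr (by simpa [hc] using hN))
  · exact of_ne hn ha hb hc hm

lemma of_third_dvd (h2 : (2 : ZMod p) ≠ 0) (h3 : (3 : ZMod p) ≠ 0)
    (hn : a ^ 2 + b ^ 2 + m ^ 2 + d ^ 2 = n) (ha3 : ¬ 3 ∣ a) (hab3 : 3 ∣ a - b) (hd3 : 3 ∣ d)
    (hm9 : 9 ∣ m) (hm : (m : ZMod p) ≠ 0) (hN : (a ^ 2 + b ^ 2 + d ^ 2 : ZMod p) ≠ 0) :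
    IsSumFourSquaresAvoiding p n := by
  by_cases hd : (d : ZMod p) = 0
  · by_cases hab : (a : ZMod p) = b
    · exact of_first_eq_second h2 h3 hn ha3 hab3 hd3 hab (by grind) hd hm
    by_cases hab₁ : (a : ZMod p) = -2 * b
    · exact of_first_eq_neg_two_mul h2 h3 (by grind) hn ha3 hab3 hd3 hm9 hab₁ (by grind) hd hm
    by_cases hab₂ : (b : ZMod p) = -2 * a
    · exact of_first_eq_neg_two_mul (a := b) (b := a) h2 h3 (by grind) (by linear_combination hn)
        (by omega) (by omega) hd3 hm9 hab₂ (by grind) hd hm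
    exact of_third_zero h2 (by linear_combination hn) hab3 hd3 hd hm hab hab₁ hab₂
  · by_cases ha : (a : ZMod p) = 0 <;> by_cases hb : (b : ZMod p) = 0
    · exact of_two_zeros h2 (by linear_combination hn) hab3 hd3 ha hb hd hm
    · exact of_first_zero h2 (by linear_combination hn) hab3 hd3 ha hb hd hm
        (.inr (by simpa [ha] using hN))
    · exact of_first_zero (a := b) (b := a) (c := d) (d := m) h2 (by linear_combination hn)
        (by omega) hd3 hb ha hd hm (.inr (by simpa [hb] using hN))
    · exact of_ne hn ha hb hm hd

lemma of_congr_of_first_zero (h2 : (2 : ZMod p) ≠ 0) (hn : a ^ 2 + b ^ 2 + c ^ 2 + m ^ 2 = n)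
    (hab3 : 3 ∣ a - b) (hac3 : 3 ∣ a - c) (hm3 : 3 ∣ m) (hm : (m : ZMod p) ≠ 0)
    (ha : (a : ZMod p) = 0) (hbc : (b : ZMod p) ≠ 0 ∨ (c : ZMod p) ≠ 0)
    (h5 : (5 : ZMod p) ≠ 0 ∨ (n + m ^ 2 : ZMod p) ≠ 0) : IsSumFourSquaresAvoiding p n := by
  by_cases hb : (b : ZMod p) = 0
  · exact of_two_zeros (a := a) (b := b) (c := m) (d := c) h2 (by linear_combination hn) hab3 hm3 ha
      hb hm (by tauto)
  by_cases hc : (c : ZMod p) = 0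
  · exact of_two_zeros (a := a) (b := c) (c := m) (d := b) h2 (by linear_combination hn) hac3 hm3 ha
      hc hm hb
  by_cases hbm : (5 : ZMod p) ≠ 0 ∨ (b ^ 2 + m ^ 2 : ZMod p) ≠ 0
  · exact of_first_zero (a := a) (b := b) (c := m) (d := c) h2 (by linear_combination hn) hab3 hm3
      ha hb hm hc hbm
  refine of_first_zero (a := a) (b := c) (c := m) (d := b) h2 (by linear_combination hn) hac3 hm3
    ha hc hm hb ?_
  refine h5.imp_right fun h hcm ↦ h ?_
  push Not at hbm
  rw [← hn]
  push_cast
  linear_combination a * ha + hbm.2 + hcm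

lemma of_congr (h2 : (2 : ZMod p) ≠ 0) (hn : a ^ 2 + b ^ 2 + c ^ 2 + m ^ 2 = n)
    (hab3 : 3 ∣ a - b) (hac3 : 3 ∣ a - c) (hm3 : 3 ∣ m) (hm : (m : ZMod p) ≠ 0)
    (habc : ¬ ((a : ZMod p) = 0 ∧ (b : ZMod p) = 0 ∧ (c : ZMod p) = 0))
    (h5 : (5 : ZMod p) ≠ 0 ∨ (n + m ^ 2 : ZMod p) ≠ 0) : IsSumFourSquaresAvoiding p n := by
  by_cases ha : (a : ZMod p) = 0
  · exact of_congr_of_first_zero h2 hn hab3 hac3 hm3 hm ha (by tauto) h5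
  by_cases hb : (b : ZMod p) = 0
  · exact of_congr_of_first_zero (a := b) (b := a) (c := c) h2 (by linear_combination hn)
      (by omega) (by omega) hm3 hm hb (.inl ha) h5
  by_cases hc : (c : ZMod p) = 0
  · exact of_congr_of_first_zero (a := c) (b := b) (c := a) h2 (by linear_combination hn)
      (by omega) (by omega) hm3 hm hc (.inl hb) h5
  exact of_ne hn ha hb hc hm

end IsSumFourSquaresAvoiding

/-! ### Choice of the fourth square -/

lemma exists_lt_four_add_mul_ne_zero {F : Type*} [Field F] (n x h : F) (hh : 6 * h ^ 3 ≠ 0) :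
    ∃ i : ℕ, i < 4 ∧ x + i * h ≠ 0 ∧ n - (x + i * h) ^ 2 ≠ 0 := by
  by_contra! hcon
  have key : ∀ i < 4, (x + (i : ℕ) * h) * (n - (x + i * h) ^ 2) = 0 := by
    intro i hi
    by_cases h0 : x + i * h = 0
    · rw [h0, zero_mul]
    · rw [hcon i hi h0, mul_zero]
  have key₀ := key 0 (by norm_num)
  have key₁ := key 1 (by norm_num)
  have key₂ := key 2 (by norm_num)
  have key₃ := key 3 (by norm_num)
  push_cast at key₀ key₁ key₂ key₃
  -- The third difference of `X * (n - X ^ 2)` with step `h` is `-6 * h ^ 3`.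
  exact hh (by linear_combination key₀ - 3 * key₁ + 3 * key₂ - key₃)

lemma sub_sq_mod_four {n m : ℤ} (hn4 : ¬ 4 ∣ n) (hm : n % 4 = 3 ↔ m % 2 = 1) :
    (n - m ^ 2) % 4 = 1 ∨ (n - m ^ 2) % 4 = 2 := by
  obtain ⟨k, rfl | rfl⟩ : ∃ k, m = 2 * k ∨ m = 2 * k + 1 := ⟨m / 2, by omega⟩
  · have : (2 * k) ^ 2 = 4 * k ^ 2 := by ring
    omega
  · have : (2 * k + 1) ^ 2 = 4 * (k ^ 2 + k) + 1 := by ring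
    omega

lemma IsSumThreeSquares.sub_sq {n m : ℤ} (hlt : m ^ 2 < n) (hn4 : ¬ 4 ∣ n)
    (hm : n % 4 = 3 ↔ m % 2 = 1) : IsSumThreeSquares (n - m ^ 2) :=
  isSumThreeSquares_of_mod_four (sub_pos.2 hlt) (sub_sq_mod_four hn4 hm)

lemma exists_nine_dvd_sub_sq {n : ℤ} (hn : n % 3 = 1) :
    ∃ x : ℤ, 0 < x ∧ x < 9 ∧ 9 ∣ n - x ^ 2 ∧ (n % 4 = 3 ↔ x % 2 = 1) := by
  by_cases h4 : n % 4 = 3 <;> rcases (by omega : n % 9 = 1 ∨ n % 9 = 4 ∨ n % 9 = 7) with h | h | h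
  · exact ⟨1, by omega⟩
  · exact ⟨7, by omega⟩
  · exact ⟨5, by omega⟩
  · exact ⟨8, by omega⟩
  · exact ⟨2, by omega⟩
  · exact ⟨4, by omega⟩

lemma exists_isSumThreeSquares_sub_sq_of_five {n : ℤ} (hn : 1296 < n) (hn4 : ¬ 4 ∣ n) :
    ∃ m : ℤ, 3 ∣ m ∧ ¬ 5 ∣ m ∧ ¬ 5 ∣ n + m ^ 2 ∧ ¬ 25 ∣ n - m ^ 2 ∧
      IsSumThreeSquares (n - m ^ 2) := by
  suffices ∃ m : ℤ, 3 ∣ m ∧ ¬ 5 ∣ m ∧ ¬ 5 ∣ n + m ^ 2 ∧ ¬ 25 ∣ n - m ^ 2 ∧ m ^ 2 < n ∧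
      (n % 4 = 3 ↔ m % 2 = 1) by
    obtain ⟨m, h3, h5, hadd, hsub, hlt, hm⟩ := this
    exact ⟨m, h3, h5, hadd, hsub, .sub_sq hlt hn4 hm⟩
  by_cases h4 : n % 4 = 3 <;> by_cases h5 : n % 5 = 4
  · by_cases h : 25 ∣ n - 3 ^ 2
    · exact ⟨27, by omega⟩
    · exact ⟨3, by omega⟩
  · by_cases h : 25 ∣ n - 9 ^ 2
    · exact ⟨21, by omega⟩
    · exact ⟨9, by omega⟩
  · by_cases h : 25 ∣ n - 12 ^ 2
    · exact ⟨18, by omega⟩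
    · exact ⟨12, by omega⟩
  · by_cases h : 25 ∣ n - 6 ^ 2
    · exact ⟨24, by omega⟩
    · exact ⟨6, by omega⟩

section

variable {p : ℕ} [Fact p.Prime] {n : ℤ}

lemma exists_sq_lt_nine_dvd_sub_sq (h2 : (2 : ZMod p) ≠ 0) (h3 : (3 : ZMod p) ≠ 0)
    (hn3 : n % 3 = 1) :
    ∃ m : ℤ, m ^ 2 < 1296 ∧ 9 ∣ n - m ^ 2 ∧ (n % 4 = 3 ↔ m % 2 = 1) ∧ (m : ZMod p) ≠ 0 ∧
      (n - m ^ 2 : ZMod p) ≠ 0 := by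
  obtain ⟨x, hx0, hx9, hnx, hx2⟩ := exists_nine_dvd_sub_sq hn3
  have h18 : (6 * 18 ^ 3 : ZMod p) ≠ 0 := by
    rw [show (6 * 18 ^ 3 : ZMod p) = 2 ^ 4 * 3 ^ 7 by norm_num]
    exact mul_ne_zero (pow_ne_zero 4 h2) (pow_ne_zero 7 h3)
  obtain ⟨i, hi, hm, hN⟩ := exists_lt_four_add_mul_ne_zero (n : ZMod p) (x - 36) 18 h18
  refine ⟨x - 36 + i * 18, ?_, ?_, by omega, by exact_mod_cast hm, by exact_mod_cast hN⟩
  · exact sq_lt_sq' (b := (36 : ℤ)) (by omega) (by omega)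
  · rw [show n - (x - 36 + i * 18) ^ 2 = n - x ^ 2 - 9 * (4 * (i - 2) * (x + 9 * (i - 2))) by ring]
    exact dvd_sub hnx (dvd_mul_right _ _)

lemma exists_nine_dvd_isSumThreeSquares_sub_sq (h2 : (2 : ZMod p) ≠ 0) (h3 : (3 : ZMod p) ≠ 0)
    (hn : 1296 < n) (hn4 : ¬ 4 ∣ n) : ∃ m : ℤ, 9 ∣ m ∧ (m : ZMod p) ≠ 0 ∧
      (n - m ^ 2 : ZMod p) ≠ 0 ∧ IsSumThreeSquares (n - m ^ 2) := by
  have hne : ∀ i j : ℕ, (2 ^ i * 3 ^ j : ZMod p) ≠ 0 := fun i j ↦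
    mul_ne_zero (pow_ne_zero i h2) (pow_ne_zero j h3)
  by_cases h4 : n % 4 = 3
  · by_cases h : (n : ZMod p) = 9 ^ 2
    · refine ⟨27, by norm_num, ?_, ?_, .sub_sq (by omega) hn4 (by omega)⟩
      · convert hne 0 3 using 1; norm_num
      · rw [h]; convert neg_ne_zero.2 (hne 3 4) using 1; norm_num
    · refine ⟨9, by norm_num, ?_, ?_, .sub_sq (by omega) hn4 (by omega)⟩
      · convert hne 0 2 using 1; norm_num
      · simpa [sub_eq_zero] using h
  · by_cases h : (n : ZMod p) = 18 ^ 2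
    · refine ⟨36, by norm_num, ?_, ?_, .sub_sq (by omega) hn4 (by omega)⟩
      · convert hne 2 2 using 1; norm_num
      · rw [h]; convert neg_ne_zero.2 (hne 2 5) using 1; norm_num
    · refine ⟨18, by norm_num, ?_, ?_, .sub_sq (by omega) hn4 (by omega)⟩
      · convert hne 1 2 using 1; norm_num
      · simpa [sub_eq_zero] using h

end

instance fact_prime_five : Fact (Nat.Prime 5) := ⟨Nat.prime_five⟩

namespace IsSumFourSquaresAvoiding

section

variable {p : ℕ} [Fact p.Prime] {n : ℤ}

lemma of_large_of_mod_three_eq_one (h2 : (2 : ZMod p) ≠ 0) (h3 : (3 : ZMod p) ≠ 0)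
    (hn : 1296 < n) (hn4 : ¬ 4 ∣ n) (hn3 : n % 3 = 1) : IsSumFourSquaresAvoiding p n := by
  obtain ⟨m, hlt, ⟨N, hN9⟩, hm2, hm, hN⟩ := exists_sq_lt_nine_dvd_sub_sq h2 h3 hn3
  have hmod := sub_sq_mod_four hn4 hm2
  obtain ⟨a, b, c, rfl⟩ := isSumThreeSquares_of_mod_four (N := N) (by omega) (by omega)
  refine of_three_dvd (a := 3 * a) (b := 3 * b) (c := 3 * c) (m := m) h2
    (by linear_combination -hN9) (dvd_mul_right 3 a) (dvd_mul_right 3 b) (dvd_mul_right 3 c) hm ?_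
  have hcast := congrArg (Int.cast : ℤ → ZMod p) hN9
  push_cast at hcast ⊢
  intro h
  exact hN (by linear_combination hcast + h)

lemma of_large_of_mod_three_eq_two (h2 : (2 : ZMod p) ≠ 0) (h3 : (3 : ZMod p) ≠ 0)
    (hn : 1296 < n) (hn4 : ¬ 4 ∣ n) (hn3 : n % 3 = 2) : IsSumFourSquaresAvoiding p n := by
  obtain ⟨m, hm9, hm, hN, hT⟩ := exists_nine_dvd_isSumThreeSquares_sub_sq h2 h3 hn hn4
  have hm9' : 9 ∣ m ^ 2 := hm9.trans (dvd_pow_self m two_ne_zero)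
  obtain ⟨a, b, d, habd, ha3, hab3, hd3⟩ := hT.exists_of_mod_three_eq_two (by omega)
  refine of_third_dvd h2 h3 (by linear_combination habd) ha3 hab3 hd3 hm9 hm ?_
  exact_mod_cast habd ▸ (by exact_mod_cast hN : ((n - m ^ 2 : ℤ) : ZMod p) ≠ 0)

lemma of_large_of_three_dvd (h2 : (2 : ZMod p) ≠ 0) (h3 : (3 : ZMod p) ≠ 0)
    (h5 : (5 : ZMod p) ≠ 0) (hn : 1296 < n) (hn4 : ¬ 4 ∣ n) (hn9 : ¬ 9 ∣ n) (hn3 : 3 ∣ n) :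
    IsSumFourSquaresAvoiding p n := by
  obtain ⟨m, hm9, hm, hN, hT⟩ := exists_nine_dvd_isSumThreeSquares_sub_sq h2 h3 hn hn4
  have hm9' : 9 ∣ m ^ 2 := hm9.trans (dvd_pow_self m two_ne_zero)
  obtain ⟨a, b, c, habc, hab3, hac3⟩ := hT.exists_of_three_dvd (by omega) (by omega)
  refine of_congr h2 (by linear_combination habc) hab3 hac3 (by omega) hm ?_ (.inl h5)
  rintro ⟨ha, hb, hc⟩
  have hcast := congrArg (Int.cast : ℤ → ZMod p) habc
  push_cast [ha, hb, hc] at hcast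
  exact hN (by linear_combination -hcast)

lemma five_of_large_of_three_dvd (hn : 1296 < n) (hn4 : ¬ 4 ∣ n)
    (hn9 : ¬ 9 ∣ n) (hn3 : 3 ∣ n) : IsSumFourSquaresAvoiding 5 n := by
  obtain ⟨m, hm3, hm5, hadd, hsub, hT⟩ := exists_isSumThreeSquares_sub_sq_of_five hn hn4
  have hm9 : 9 ∣ m ^ 2 := pow_dvd_pow_of_dvd hm3 2
  have hne : ∀ k : ℤ, ¬ 5 ∣ k → (k : ZMod 5) ≠ 0 := fun k hk h ↦
    hk ((ZMod.intCast_zmod_eq_zero_iff_dvd k 5).1 h)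
  obtain ⟨a, b, c, habc, hab3, hac3⟩ := hT.exists_of_three_dvd (by omega) (by omega)
  refine of_congr (by decide) (by linear_combination habc) hab3 hac3 hm3 (hne m hm5) ?_
    (.inr (by exact_mod_cast hne _ hadd))
  rintro ⟨ha, hb, hc⟩
  rw [ZMod.intCast_zmod_eq_zero_iff_dvd] at ha hb hc
  refine hsub (habc ▸ dvd_add (dvd_add ?_ ?_) ?_)
  exacts [pow_dvd_pow_of_dvd ha 2, pow_dvd_pow_of_dvd hb 2, pow_dvd_pow_of_dvd hc 2]

lemma of_large (h2 : (2 : ZMod p) ≠ 0) (h3 : (3 : ZMod p) ≠ 0) (hn : 1296 < n) (hn4 : ¬ 4 ∣ n)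
    (hn9 : ¬ 9 ∣ n) : IsSumFourSquaresAvoiding p n := by
  rcases (by omega : 3 ∣ n ∨ n % 3 = 1 ∨ n % 3 = 2) with hn3 | hn3 | hn3
  · by_cases h5 : (5 : ZMod p) = 0
    · obtain rfl : p = 5 := (Nat.prime_dvd_prime_iff_eq Fact.out Nat.prime_five).1
        ((ZMod.natCast_eq_zero_iff 5 p).1 (by exact_mod_cast h5))
      exact five_of_large_of_three_dvd hn hn4 hn9 hn3
    · exact of_large_of_three_dvd h2 h3 h5 hn hn4 hn9 hn3
  · exact of_large_of_mod_three_eq_one h2 h3 hn hn4 hn3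
  · exact of_large_of_mod_three_eq_two h2 h3 hn hn4 hn3

lemma sq_mul {k : ℤ} (hk : (k : ZMod p) ≠ 0) (h : IsSumFourSquaresAvoiding p n) :
    IsSumFourSquaresAvoiding p (k ^ 2 * n) := by
  obtain ⟨a, b, c, d, rfl, ha, hb, hc, hd⟩ := h
  refine ⟨k * a, k * b, k * c, k * d, by ring, ?_, ?_, ?_, ?_⟩ <;> simp_all

theorem of_forall_le {n : ℕ} (h2 : (2 : ZMod p) ≠ 0) (h3 : (3 : ZMod p) ≠ 0)
    (h : ∀ k : ℕ, 144 < k → k ≤ 1296 → IsSumFourSquaresAvoiding p k) (hn : 144 < n) :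
    IsSumFourSquaresAvoiding p n := by
  induction n using Nat.strong_induction_on with
  | _ n ih =>
  rcases le_or_gt n 1296 with hle | hlt
  · exact h n hn hle
  by_cases h4 : 4 ∣ n
  · obtain ⟨k, rfl⟩ := h4
    exact_mod_cast (ih k (by omega) (by omega)).sq_mul (k := 2) (by exact_mod_cast h2)
  by_cases h9 : 9 ∣ n
  · obtain ⟨k, rfl⟩ := h9
    exact_mod_cast (ih k (by omega) (by omega)).sq_mul (k := 3) (by exact_mod_cast h3)
  exact of_large h2 h3 (by omega) (by omega) (by omega)

end

lemma of_lt_sq {p n : ℕ} (hn : n < p ^ 2) : IsSumFourSquaresAvoiding p n := by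
  obtain ⟨a, b, c, d, h⟩ := Nat.sum_four_squares n
  have key : ∀ x : ℕ, x ^ 2 ≤ n → ((x : ℤ) : ZMod p) = 0 → (x : ℤ) = 0 := by
    intro x hx h0
    rw [Int.cast_natCast, ZMod.natCast_eq_zero_iff] at h0
    exact_mod_cast Nat.eq_zero_of_dvd_of_lt h0 (lt_of_pow_lt_pow_left₀ 2 p.zero_le (hx.trans_lt hn))
  exact ⟨a, b, c, d, by exact_mod_cast h, key a (by omega), key b (by omega), key c (by omega),
    key d (by omega)⟩

end IsSumFourSquaresAvoiding

/-! ### Small numbers -/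

/-- The bitset of all `n + s ^ 2` with `n` in the bitset `S` and `s` in the list `l`, where the
members of a bitset are the positions of the ones in its binary expansion. -/
def addSquaresBitset (l : List ℕ) (S : ℕ) : ℕ :=
  l.foldr (fun s T ↦ S <<< (s ^ 2) ||| T) 0

lemma exists_of_testBit_addSquaresBitset {l : List ℕ} {S n : ℕ}
    (h : (addSquaresBitset l S).testBit n) : ∃ s ∈ l, ∃ k, S.testBit k ∧ n = k + s ^ 2 := by
  induction l with
  | nil => simp [addSquaresBitset] at h
  | cons s l ih =>
    have hcons : addSquaresBitset (s :: l) S = S <<< (s ^ 2) ||| addSquaresBitset l S := rfl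
    rw [hcons, Nat.testBit_or, Nat.testBit_shiftLeft, Bool.or_eq_true, Bool.and_eq_true,
      decide_eq_true_eq] at h
    rcases h with ⟨hle, h⟩ | h
    · exact ⟨s, List.mem_cons_self, n - s ^ 2, h, (Nat.sub_add_cancel hle).symm⟩
    · obtain ⟨s', hs', h'⟩ := ih h
      exact ⟨s', List.mem_cons_of_mem _ hs', h'⟩

/-- The numbers below `37` that are zero or not divisible by `p`; since `36 ^ 2 = 1296`, they
suffice to represent the numbers up to `1296`. -/
def avoidingRange (p : ℕ) : List ℕ := (List.range 37).filter fun s ↦ p ∣ s → s = 0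

/-- The bitset of sums of four squares of members of `avoidingRange p`. -/
def fourSquaresBitset (p : ℕ) : ℕ :=
  (addSquaresBitset (avoidingRange p))^[4] 1

lemma testBit_of_mod_two_pow_eq {S k n : ℕ} (h : S % 2 ^ k = 2 ^ k - 1) (hn : n < k) :
    S.testBit n := by
  have hbit := congrArg (Nat.testBit · n) h
  simpa [Nat.testBit_mod_two_pow, Nat.testBit_two_pow_sub_one, hn] using hbit

lemma fourSquaresBitset_five_or_mod :
    (fourSquaresBitset 5 ||| 2 ^ 79) % 2 ^ 1297 = 2 ^ 1297 - 1 := by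
  decide +kernel

lemma fourSquaresBitset_mod :
    ∀ p < 37, 7 ≤ p → p % 2 = 1 → fourSquaresBitset p % 2 ^ 1297 = 2 ^ 1297 - 1 := by
  decide +kernel

lemma testBit_fourSquaresBitset_five {n : ℕ} (hn : n < 1297) (hn79 : n ≠ 79) :
    (fourSquaresBitset 5).testBit n := by
  have h := testBit_of_mod_two_pow_eq fourSquaresBitset_five_or_mod hn
  rw [Nat.testBit_or, Nat.testBit_two_pow] at h
  simpa [hn79.symm] using h

namespace IsSumFourSquaresAvoiding

lemma of_testBit {p n : ℕ} (h : (fourSquaresBitset p).testBit n) :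
    IsSumFourSquaresAvoiding p n := by
  have hl : ∀ s ∈ avoidingRange p, ((s : ℤ) : ZMod p) = 0 → (s : ℤ) = 0 := by
    intro s hs h0
    rw [Int.cast_natCast, ZMod.natCast_eq_zero_iff] at h0
    exact_mod_cast of_decide_eq_true (List.mem_filter.1 hs).2 h0
  obtain ⟨a, ha, _, h₁, rfl⟩ := exists_of_testBit_addSquaresBitset h
  obtain ⟨b, hb, _, h₂, rfl⟩ := exists_of_testBit_addSquaresBitset h₁
  obtain ⟨c, hc, _, h₃, rfl⟩ := exists_of_testBit_addSquaresBitset h₂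
  obtain ⟨d, hd, k, h₄, rfl⟩ := exists_of_testBit_addSquaresBitset h₃
  obtain rfl : k = 0 := Nat.testBit_one_eq_true_iff_self_eq_zero.1 h₄
  exact ⟨a, b, c, d, by push_cast; ring, hl a ha, hl b hb, hl c hc, hl d hd⟩

lemma of_le_of_odd {p n : ℕ} (hp : 7 ≤ p) (hodd : p % 2 = 1) (hn : n ≤ 1296) :
    IsSumFourSquaresAvoiding p n := by
  rcases Nat.lt_or_ge p 37 with hlt | hge
  · exact of_testBit (testBit_of_mod_two_pow_eq (fourSquaresBitset_mod p hlt hp hodd) (by omega))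
  · exact of_lt_sq (by nlinarith)

theorem of_seven_le {p n : ℕ} (hp : p.Prime) (hp7 : 7 ≤ p) : IsSumFourSquaresAvoiding p n := by
  have : Fact p.Prime := ⟨hp⟩
  have hne : ∀ k : ℕ, 0 < k → k < p → (k : ZMod p) ≠ 0 := fun k hk hkp h ↦
    Nat.not_dvd_of_pos_of_lt hk hkp ((ZMod.natCast_eq_zero_iff k p).1 h)
  have hsmall : ∀ k : ℕ, k ≤ 1296 → IsSumFourSquaresAvoiding p k := fun _ ↦
    of_le_of_odd hp7 (Nat.odd_iff.1 (hp.odd_of_ne_two (by omega)))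
  rcases le_or_gt n 144 with hn | hn
  · exact hsmall n (by omega)
  · exact of_forall_le (by exact_mod_cast hne 2 (by omega) (by omega))
      (by exact_mod_cast hne 3 (by omega) (by omega)) (fun k _ ↦ hsmall k) hn

theorem five {n : ℕ} (hn79 : n ≠ 79) : IsSumFourSquaresAvoiding 5 n := by
  have hsmall : ∀ k : ℕ, k ≤ 1296 → k ≠ 79 → IsSumFourSquaresAvoiding 5 k := fun k hk hk79 ↦
    of_testBit (testBit_fourSquaresBitset_five (by omega) hk79)
  rcases le_or_gt n 144 with hn | hn
  · exact hsmall n (by omega) hn79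
  · exact of_forall_le (by decide) (by decide) (fun k hk hk' ↦ hsmall k hk' (by omega)) hn

end IsSumFourSquaresAvoiding

lemma exists_fin_ne_zero_sum_eq {ι M N : Type*} [Fintype ι] [Zero M] [AddCommMonoid N] (v : ι → M)
    {f : M → N} (hf : f 0 = 0) :
    ∃ k ≤ Fintype.card ι, ∃ x : Fin k → M, (∀ i, x i ≠ 0 ∧ x i ∈ Set.range v) ∧
      ∑ i, f (x i) = ∑ i, f (v i) := by
  classical
  let s : Finset ι := {i | v i ≠ 0}
  refine ⟨s.card, s.card_le_univ, fun i ↦ v (s.equivFin.symm i), fun i ↦ ⟨?_, _, rfl⟩, ?_⟩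
  · exact (Finset.mem_filter.1 (s.equivFin.symm i).2).2
  · rw [s.equivFin.symm.sum_comp fun i ↦ f (v i), Finset.sum_coe_sort s fun i ↦ f (v i)]
    refine Finset.sum_subset s.subset_univ fun i _ hi ↦ ?_
    rw [show v i = 0 by simpa [s] using hi, hf]

lemma IsSumFourSquaresAvoiding.exists_sum_sq {p : ℕ} {n : ℤ} (hn : n ≠ 0)
    (h : IsSumFourSquaresAvoiding p n) :
    ∃ k : ℕ, 1 ≤ k ∧ k ≤ 4 ∧
      ∃ x : Fin k → ℤ, (∀ i, ¬ (p : ℤ) ∣ x i) ∧ n = ∑ i, (x i) ^ 2 := by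
  obtain ⟨a, b, c, d, hsum, ha, hb, hc, hd⟩ := h
  obtain ⟨k, hk, x, hx, hxsum⟩ :=
    exists_fin_ne_zero_sum_eq ![a, b, c, d] (f := (· ^ 2)) (zero_pow two_ne_zero)
  have hxn : n = ∑ i, x i ^ 2 := by
    rw [hxsum, ← hsum, Fin.sum_univ_four]; rfl
  refine ⟨k, Nat.one_le_iff_ne_zero.2 ?_, hk, x, fun i hi ↦ ?_, hxn⟩
  · rintro rfl
    exact hn (by simpa using hxn)
  · obtain ⟨hx0, j, hj⟩ := hx i
    rw [← ZMod.intCast_zmod_eq_zero_iff_dvd, ← hj] at hi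
    rw [← hj] at hx0
    fin_cases j
    exacts [hx0 (ha hi), hx0 (hb hi), hx0 (hc hi), hx0 (hd hi)]

theorem main_theorem :
    (∀ p : ℕ, p.Prime → 7 ≤ p → ∀ n : ℕ, 0 < n →
      ∃ k : ℕ, 1 ≤ k ∧ k ≤ 4 ∧
        ∃ x : Fin k → ℤ, (∀ i, ¬ (p : ℤ) ∣ x i) ∧ (n : ℤ) = ∑ i, (x i) ^ 2) ∧
    (∀ n : ℕ, 0 < n → n ≠ 79 →
      ∃ k : ℕ, 1 ≤ k ∧ k ≤ 4 ∧
        ∃ x : Fin k → ℤ, (∀ i, ¬ (5 : ℤ) ∣ x i) ∧ (n : ℤ) = ∑ i, (x i) ^ 2) := by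
  constructor
  · intro p hp hp7 n hn
    exact (IsSumFourSquaresAvoiding.of_seven_le hp hp7).exists_sum_sq (by omega)
  · intro n hn hn79
    exact (IsSumFourSquaresAvoiding.five hn79).exists_sum_sq (by omega)
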